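/- Let u ∈ W and γ ∈ R^+ with ℓ(us_γ) = ℓ(u) + 1. Then for every 1 ≤ i ≤ n with ⟨χ_i, γ^∨⟩ ≠ 0, one has gr(us_γ) ≤ gr(u) + e_m in the lexicographic order on Z^{r+1}, where m is the unique index with α_i ∈ Δ_m \ Δ_{m−1}. -/

import Mathlib

/-!
The length of `w` is the number of inversions of `w`, and the length of the factor `v_k` of `w` is
the number of those inversions that lie in `R_{Δ_k}` but not in `R_{Δ_{k-1}}`. So the lemma is about
the inversions of `u` and of `u s_γ`, sorted by level. Let `p` be the level of `γ`.

* Since `ℓ(u s_γ) > ℓ(u)`, we have `u γ > 0`, and the map sending `δ` to `s_γ δ` if that is positive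
  and to `δ` otherwise embeds the inversions of `u` into those of `u s_γ` other than `γ`. As
  `ℓ(u s_γ) = ℓ(u) + 1`, this embedding is a bijection.
* Below level `p`, every inversion `δ` of `u s_γ` is one of `u`. If `s_γ δ < 0`, this is the
  bijection. If `s_γ δ > 0`, then `⟨δ, γ^∨⟩ ≤ 0`, because some simple root occurs in `γ` but not in
  `δ`, and `u s_γ δ = u δ - ⟨δ, γ^∨⟩ u γ` is negative only if `u δ` is.
* Above level `p`, the reflection `s_γ` permutes the positive roots of each level, so the number of
  inversions at that level is the same for `u` and `u s_γ`.

As the total number of inversions grows by one, `gr(u s_γ) ≤ gr(u) + e_p`. Finally `m ≤ p`, because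
`γ^∨` involves only simple coroots `α_i^∨` for which `α_i` occurs in `γ`.
-/

open scoped BigOperators

/-- A reduced crystallographic root system with a fixed base `α_1, …, α_n` of simple
roots, bundled with its Weyl group `W`.  A root `γ` is recorded by its integer
coordinate vector in the basis of simple roots (so the `i`-th simple root is
`Pi.single i 1`), and `cor γ` is the coordinate vector of the coroot `γ^∨` in the
basis of simple coroots (hence `cor γ i = ⟨χ_i, γ^∨⟩` for the fundamental weights
`χ_i`).  `A i j = ⟨α_i, α_j^∨⟩` is the Cartan matrix, `σ γ` is the reflection `s_γ`
and `act` is the action of the Weyl group on the root lattice. -/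
structure RootSystemData (n : ℕ) where
  A : Fin n → Fin n → ℤ
  R : Finset (Fin n → ℤ)
  cor : (Fin n → ℤ) → (Fin n → ℤ)
  W : Type
  [grp : Group W]
  σ : (Fin n → ℤ) → W
  act : W → (Fin n → ℤ) → (Fin n → ℤ)
  simple_mem : ∀ i : Fin n, (Pi.single i 1 : Fin n → ℤ) ∈ R
  root_ne_zero : ∀ γ ∈ R, γ ≠ 0
  neg_mem : ∀ γ ∈ R, -γ ∈ R
  pos_or_neg : ∀ γ ∈ R, (∀ i, 0 ≤ γ i) ∨ (∀ i, γ i ≤ 0)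
  reduced : ∀ γ ∈ R, ∀ k : ℤ, k • γ ∈ R → k = 1 ∨ k = -1
  cor_simple : ∀ i : Fin n, cor (Pi.single i 1) = Pi.single i 1
  cor_neg : ∀ γ ∈ R, cor (-γ) = -(cor γ)
  pair_self : ∀ γ ∈ R, (∑ i, ∑ j, γ i * A i j * cor γ j) = 2
  act_one : ∀ x, act 1 x = x
  act_mul : ∀ w w' x, act (w * w') x = act w (act w' x)
  act_refl : ∀ γ ∈ R, ∀ x, act (σ γ) x = x - (∑ i, ∑ j, x i * A i j * cor γ j) • γ
  act_mem : ∀ (w : W), ∀ γ ∈ R, act w γ ∈ R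
  cor_refl : ∀ γ ∈ R, ∀ β ∈ R,
    cor (act (σ γ) β) = cor β - (∑ i, ∑ j, γ i * A i j * cor β j) • cor γ
  refl_sq : ∀ γ ∈ R, σ γ * σ γ = 1
  refl_act : ∀ (w : W), ∀ γ ∈ R, σ (act w γ) = w * σ γ * w⁻¹
  act_faithful : ∀ w w' : W, (∀ γ ∈ R, act w γ = act w' γ) → w = w'
  generated : ∀ w : W, ∃ l : List (Fin n), w = (l.map fun i => σ (Pi.single i 1)).prod

namespace RootSystemData

instance {n : ℕ} (c : RootSystemData n) : Group c.W := c.grp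

/-- the pairing `⟨x, λ⟩` between an element `x` of the root lattice (coordinates in
the basis of simple roots) and an element `λ` of the coroot lattice (coordinates in
the basis of simple coroots) -/
def pair {n : ℕ} (c : RootSystemData n) (x lam : Fin n → ℤ) : ℤ :=
  ∑ i, ∑ j, x i * c.A i j * lam j

/-- the `i`-th simple root -/
def sroot {n : ℕ} (_c : RootSystemData n) (i : Fin n) : Fin n → ℤ := Pi.single i 1

/-- the simple reflection `s_i` -/
def s {n : ℕ} (c : RootSystemData n) (i : Fin n) : c.W := c.σ (c.sroot i)

/-- `s_{α_{t+1}}` for a `0`-based natural number index `t` (`= 1` when out of range) -/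
def sN {n : ℕ} (c : RootSystemData n) (t : ℕ) : c.W := if h : t < n then c.s ⟨t, h⟩ else 1

/-- `⟨2ρ, λ⟩ = Σ_{β ∈ R^+} ⟨β, λ⟩`, where `ρ` is the half-sum of the positive roots -/
def pairTwoRho {n : ℕ} (c : RootSystemData n) (lam : Fin n → ℤ) : ℤ :=
  ∑ β ∈ c.R, if ∀ i, 0 ≤ β i then c.pair β lam else 0

/-- the length of `w ∈ W` with respect to the simple reflections -/
noncomputable def len {n : ℕ} (c : RootSystemData n) (w : c.W) : ℕ :=
  sInf {k | ∃ l : List (Fin n), l.length = k ∧ (l.map c.s).prod = w}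

/-- the parabolic subgroup `W_S` generated by the simple reflections indexed by `S` -/
def Wsub {n : ℕ} (c : RootSystemData n) (S : Finset (Fin n)) : Subgroup c.W :=
  Subgroup.closure (c.s '' ↑S)

/-- `w ∈ W_T^S`: `w ∈ W_T` and `w` has minimal length in the coset `w W_S` -/
def MinRep {n : ℕ} (c : RootSystemData n) (T S : Finset (Fin n)) (w : c.W) : Prop :=
  w ∈ c.Wsub T ∧ ∀ u ∈ c.Wsub S, c.len w ≤ c.len (w * u)

/-- `w` is the longest element of `W_S` -/
def IsLongest {n : ℕ} (c : RootSystemData n) (S : Finset (Fin n)) (w : c.W) : Prop :=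
  w ∈ c.Wsub S ∧ ∀ v ∈ c.Wsub S, c.len v ≤ c.len w

end RootSystemData

/-- the support of `γ` is contained in `S`, i.e. `γ` lies in the span of
`{α_i : i ∈ S}` (for a root `γ`, membership in `R_S`) -/
def suppIn {n : ℕ} (S : Finset (Fin n)) (γ : Fin n → ℤ) : Prop :=
  ∀ i, i ∉ S → γ i = 0

/-- `Δ_j` for `0 ≤ j ≤ r+1`: the index set of the first `j` simple roots for `j ≤ r`,
and all of `Δ` for `j = r+1`.  (Indices of simple roots are `0`-based, so
`α_1, …, α_j` correspond to the indices `0, …, j-1`.) -/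
def deltaSet (n r j : ℕ) : Finset (Fin n) :=
  if j = r + 1 then Finset.univ else Finset.univ.filter fun i => (i : ℕ) < j

namespace RootSystemData

/-- `v 0, …, v r` (standing for `v_1, …, v_{r+1}`) is the decomposition of `w`
associated to `(Δ_P, Υ)`:  each `v_i ∈ W_{Δ_i}^{Δ_{i-1}}` and `w = v_{r+1} v_r ⋯ v_1`. -/
def IsDecomp {n : ℕ} (c : RootSystemData n) (r : ℕ) (w : c.W)
    (v : Fin (r + 1) → c.W) : Prop :=
  (∀ k : Fin (r + 1), c.MinRep (deltaSet n r ((k : ℕ) + 1)) (deltaSet n r (k : ℕ)) (v k)) ∧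
    w = (List.ofFn v).reverse.prod

/-- the first `m` simple roots `α_1, …, α_m` form a path of type `A_m`:
`⟨α_i, α_j^∨⟩ = -1` if `|i-j| = 1` and `⟨α_i, α_j^∨⟩ = 0` if `|i-j| ≥ 2`. -/
def PathA {n : ℕ} (c : RootSystemData n) (m : ℕ) : Prop :=
  ∀ i j : Fin n, (i : ℕ) < m → (j : ℕ) < m →
    (((i : ℕ) + 1 = (j : ℕ) ∨ (j : ℕ) + 1 = (i : ℕ)) → c.A i j = -1) ∧
    ((i : ℕ) + 2 ≤ (j : ℕ) ∨ (j : ℕ) + 2 ≤ (i : ℕ) → c.A i j = 0)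

/-- `u_{[k,m]} = s_k s_{k+1} ⋯ s_m` (`1`-based indices; `u_{[k,m]} = 1` for `k > m`) -/
def uu {n : ℕ} (c : RootSystemData n) (k m : ℕ) : c.W :=
  ((List.range' k (m + 1 - k)).map fun t => c.sN (t - 1)).prod

/-- `u_i^{(m)} = s_{m-i+1} s_{m-i+2} ⋯ s_m` -/
def uElt {n : ℕ} (c : RootSystemData n) (i m : ℕ) : c.W := c.uu (m - i + 1) m

end RootSystemData

/-- strict lexicographic order on `Fin m → ℤ` -/
def lexLT {m : ℕ} (x y : Fin m → ℤ) : Prop :=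
  ∃ j, x j < y j ∧ ∀ k, k < j → x k = y k

/-- lexicographic order on `Fin m → ℤ` -/
def lexLE {m : ℕ} (x y : Fin m → ℤ) : Prop := x = y ∨ lexLT x y

/-- the grading `gr(q_{α_{j+1}^∨}) ∈ ℤ^{r+1}` (for the `0`-based index `j < r`), when
`Δ_P` is of type `A_r`: in `1`-based terms, `gr(q_{α_1^∨}) = 2·e_1` and
`gr(q_{α_j^∨}) = (1-j)·e_{j-1} + (1+j)·e_j` for `2 ≤ j ≤ r`. -/
def grQ (r j : ℕ) : Fin (r + 1) → ℤ := fun k =>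
  (if (k : ℕ) = j then (j : ℤ) + 2 else 0) + (if (k : ℕ) + 1 = j then -(j : ℤ) else 0)

/-- the grading `gr(q_λ)` for `λ ∈ Q_P^∨` (coordinates in simple coroots), extended
additively from the `gr(q_{α_j^∨})`, when `Δ_P` is of type `A_r` -/
def grQlam (n r : ℕ) (lam : Fin n → ℤ) : Fin (r + 1) → ℤ :=
  fun k => ∑ j, lam j * grQ r (j : ℕ) k

namespace RootSystemData

variable {n : ℕ} (c : RootSystemData n)

/-! ### The action on the root lattice -/

theorem act_refl_eq_sub {γ : Fin n → ℤ} (hγ : γ ∈ c.R) (x : Fin n → ℤ) :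
    c.act (c.σ γ) x = x - c.pair x (c.cor γ) • γ :=
  c.act_refl γ hγ x

theorem pair_add_left (x y l : Fin n → ℤ) : c.pair (x + y) l = c.pair x l + c.pair y l := by
  simp [pair, add_mul, Finset.sum_add_distrib]

theorem sroot_mem (i : Fin n) : c.sroot i ∈ c.R := c.simple_mem i

theorem sroot_nonneg (i : Fin n) : 0 ≤ c.sroot i := Pi.single_nonneg.2 zero_le_one

theorem sroot_apply_self (i : Fin n) : c.sroot i i = 1 := Pi.single_eq_same i 1

theorem sroot_apply_of_ne {i k : Fin n} (h : k ≠ i) : c.sroot i k = 0 := Pi.single_eq_of_ne h 1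

theorem exists_word (w : c.W) : ∃ l : List (Fin n), (l.map c.s).prod = w :=
  (c.generated w).imp fun _ h => h.symm

theorem act_add (w : c.W) (x y : Fin n → ℤ) : c.act w (x + y) = c.act w x + c.act w y := by
  obtain ⟨l, rfl⟩ := c.exists_word w
  induction l with
  | nil => simp only [List.map_nil, List.prod_nil, c.act_one]
  | cons i t ih =>
    simp only [List.map_cons, List.prod_cons, c.act_mul, ih, s,
      c.act_refl_eq_sub (c.sroot_mem i), pair_add_left]
    module

/-- The action of a Weyl group element on the root lattice, as a group homomorphism. -/
def actHom (w : c.W) : (Fin n → ℤ) →+ (Fin n → ℤ) := AddMonoidHom.mk' (c.act w) (c.act_add w)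

theorem act_zsmul (w : c.W) (a : ℤ) (x : Fin n → ℤ) : c.act w (a • x) = a • c.act w x :=
  map_zsmul (c.actHom w) a x

theorem act_neg (w : c.W) (x : Fin n → ℤ) : c.act w (-x) = -c.act w x :=
  map_neg (c.actHom w) x

theorem act_sub (w : c.W) (x y : Fin n → ℤ) : c.act w (x - y) = c.act w x - c.act w y :=
  map_sub (c.actHom w) x y

theorem act_eq_sum (w : c.W) (x : Fin n → ℤ) :
    c.act w x = ∑ i, x i • c.act w (c.sroot i) :=
  calc c.act w x = c.actHom w (∑ i, x i • c.sroot i) := by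
        congr 1
        simpa [sroot, ← Pi.single_smul] using (Finset.univ_sum_single x).symm
    _ = ∑ i, x i • c.act w (c.sroot i) := by
        rw [map_sum]
        exact Finset.sum_congr rfl fun i _ => c.act_zsmul w _ _

theorem act_inv_act (w : c.W) (x : Fin n → ℤ) : c.act w⁻¹ (c.act w x) = x := by
  rw [← c.act_mul, inv_mul_cancel, c.act_one]

theorem act_act_inv (w : c.W) (x : Fin n → ℤ) : c.act w (c.act w⁻¹ x) = x := by
  rw [← c.act_mul, mul_inv_cancel, c.act_one]

theorem act_refl_act_refl {γ : Fin n → ℤ} (hγ : γ ∈ c.R) (x : Fin n → ℤ) :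
    c.act (c.σ γ) (c.act (c.σ γ) x) = x := by
  rw [← c.act_mul, c.refl_sq γ hγ, c.act_one]

theorem act_refl_self {γ : Fin n → ℤ} (hγ : γ ∈ c.R) : c.act (c.σ γ) γ = -γ := by
  have pair_self : c.pair γ (c.cor γ) = 2 := c.pair_self γ hγ
  rw [c.act_refl_eq_sub hγ, pair_self]
  module

theorem act_mul_refl {γ : Fin n → ℤ} (hγ : γ ∈ c.R) (w : c.W) (x : Fin n → ℤ) :
    c.act (w * c.σ γ) x = c.act w x - c.pair x (c.cor γ) • c.act w γ := by
  rw [c.act_mul, c.act_refl_eq_sub hγ, act_sub, act_zsmul]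

theorem act_s_sroot (i : Fin n) : c.act (c.s i) (c.sroot i) = -c.sroot i :=
  c.act_refl_self (c.sroot_mem i)

theorem act_s_act_s (i : Fin n) (x : Fin n → ℤ) : c.act (c.s i) (c.act (c.s i) x) = x :=
  c.act_refl_act_refl (c.sroot_mem i) x

theorem s_mul_s (i : Fin n) : c.s i * c.s i = 1 := c.refl_sq _ (c.sroot_mem i)

theorem act_s_apply_of_ne {i k : Fin n} (hk : k ≠ i) (x : Fin n → ℤ) :
    c.act (c.s i) x k = x k := by
  simp [s, c.act_refl_eq_sub (c.sroot_mem i), c.sroot_apply_of_ne hk]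

/-! ### Positive and negative roots -/

theorem not_nonneg_iff {β : Fin n → ℤ} (hβ : β ∈ c.R) : ¬ 0 ≤ β ↔ β ≤ 0 :=
  ⟨fun h => (c.pos_or_neg β hβ).resolve_left h,
    fun h h' => c.root_ne_zero β hβ (le_antisymm h h')⟩

theorem not_nonneg_neg_iff {β : Fin n → ℤ} (hβ : β ∈ c.R) : ¬ 0 ≤ -β ↔ 0 ≤ β := by
  rw [neg_nonneg, ← c.not_nonneg_iff hβ, not_not]

theorem nonneg_of_apply_pos {β : Fin n → ℤ} (hβ : β ∈ c.R) {i : Fin n} (hi : 0 < β i) :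
    0 ≤ β :=
  (c.pos_or_neg β hβ).resolve_right fun h => (h i).not_gt hi

theorem act_s_nonneg {β : Fin n → ℤ} (hβ : β ∈ c.R) (hpos : 0 ≤ β) {i : Fin n}
    (hne : β ≠ c.sroot i) : 0 ≤ c.act (c.s i) β := by
  by_cases h : ∃ k ≠ i, β k ≠ 0
  · obtain ⟨k, hk, hk0⟩ := h
    refine c.nonneg_of_apply_pos (c.act_mem _ _ hβ) (i := k) ?_
    rw [c.act_s_apply_of_ne hk]
    exact (hpos k).lt_of_ne' hk0
  · push Not at h
    have hβi : β = β i • c.sroot i := by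
      ext k
      by_cases hk : k = i
      · simp [hk, c.sroot_apply_self]
      · simp [c.sroot_apply_of_ne hk, h k hk]
    rcases c.reduced _ (c.sroot_mem i) (β i) (hβi ▸ hβ) with h1 | h1
    · exact absurd (by rw [hβi, h1, one_smul]) hne
    · exact absurd (hpos i) (by simp [h1])

theorem act_nonneg_of_suppIn {w : c.W} {S : Finset (Fin n)}
    (h : ∀ i ∈ S, 0 ≤ c.act w (c.sroot i)) {x : Fin n → ℤ} (hpos : 0 ≤ x) (hx : suppIn S x) :
    0 ≤ c.act w x := by
  rw [c.act_eq_sum]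
  refine Finset.sum_nonneg fun i _ => ?_
  by_cases hi : i ∈ S
  · exact smul_nonneg (hpos i) (h i hi)
  · simp [hx i hi]

/-! ### Length and inversions -/

open Classical in
/-- The inversions of `w`: the positive roots that `w` makes negative. -/
noncomputable def inv (w : c.W) : Finset (Fin n → ℤ) :=
  c.R.filter fun β => 0 ≤ β ∧ ¬ 0 ≤ c.act w β

theorem mem_inv {w : c.W} {β : Fin n → ℤ} :
    β ∈ c.inv w ↔ β ∈ c.R ∧ 0 ≤ β ∧ ¬ 0 ≤ c.act w β := by
  classical
  exact Finset.mem_filter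

theorem inv_one : c.inv 1 = ∅ := by
  ext β
  simp [mem_inv, c.act_one]

theorem sroot_mem_inv_mul_s {w : c.W} {i : Fin n} (h : 0 ≤ c.act w (c.sroot i)) :
    c.sroot i ∈ c.inv (w * c.s i) := by
  refine c.mem_inv.2 ⟨c.sroot_mem i, c.sroot_nonneg i, ?_⟩
  rwa [c.act_mul, c.act_s_sroot, c.act_neg, c.not_nonneg_neg_iff (c.act_mem _ _ (c.sroot_mem i))]

theorem act_s_mem_inv {w : c.W} {i : Fin n} {β : Fin n → ℤ} (hne : β ≠ c.sroot i)
    (hβ : β ∈ c.inv (w * c.s i)) : c.act (c.s i) β ∈ c.inv w := by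
  rw [mem_inv, c.act_mul] at hβ
  exact c.mem_inv.2 ⟨c.act_mem _ _ hβ.1, c.act_s_nonneg hβ.1 hβ.2.1 hne, hβ.2.2⟩

theorem card_inv_mul_s {w : c.W} {i : Fin n} (h : 0 ≤ c.act w (c.sroot i)) :
    (c.inv (w * c.s i)).card = (c.inv w).card + 1 := by
  classical
  rw [← Finset.card_erase_add_one (c.sroot_mem_inv_mul_s h)]
  congr 1
  refine Finset.card_nbij' (c.act (c.s i)) (c.act (c.s i)) (fun β hβ => ?_) (fun β hβ => ?_)
    (fun β _ => c.act_s_act_s i β) (fun β _ => c.act_s_act_s i β)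
  · exact c.act_s_mem_inv (Finset.ne_of_mem_erase hβ) (Finset.mem_of_mem_erase hβ)
  · have hpos := (c.mem_inv.1 hβ).2.1
    have hne : β ≠ c.sroot i := fun e => (c.mem_inv.1 hβ).2.2 (e ▸ h)
    refine Finset.mem_erase.2 ⟨fun e => ?_, c.act_s_mem_inv hne ?_⟩
    · rw [← c.act_s_act_s i β, e, c.act_s_sroot] at hpos
      exact (c.not_nonneg_neg_iff (c.sroot_mem i)).2 (c.sroot_nonneg i) hpos
    · rwa [mul_assoc, s_mul_s, mul_one]

/-- The exchange condition. -/
theorem exists_word_mul_s_of_not_nonneg (l : List (Fin n)) {i : Fin n}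
    (h : ¬ 0 ≤ c.act (l.map c.s).prod (c.sroot i)) :
    ∃ l' : List (Fin n), l'.length + 1 = l.length ∧
      (l'.map c.s).prod = (l.map c.s).prod * c.s i := by
  induction l with
  | nil => exact absurd (by simpa [c.act_one] using c.sroot_nonneg i) h
  | cons j t ih =>
    by_cases ht : 0 ≤ c.act (t.map c.s).prod (c.sroot i)
    · have act_eq : c.act (t.map c.s).prod (c.sroot i) = c.sroot j := by
        by_contra hne
        refine h ?_
        rw [List.map_cons, List.prod_cons, c.act_mul]
        exact c.act_s_nonneg (c.act_mem _ _ (c.sroot_mem i)) ht hne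
      have s_eq : c.s j = (t.map c.s).prod * c.s i * (t.map c.s).prod⁻¹ := by
        rw [s, ← act_eq, c.refl_act _ _ (c.sroot_mem i), s]
      refine ⟨t, rfl, ?_⟩
      rw [List.map_cons, List.prod_cons, s_eq, inv_mul_cancel_right, mul_assoc, c.s_mul_s, mul_one]
    · obtain ⟨l', hlength, hprod⟩ := ih ht
      exact ⟨j :: l', by simp [hlength], by simp [hprod, mul_assoc]⟩

theorem len_le_length (l : List (Fin n)) : c.len (l.map c.s).prod ≤ l.length :=
  Nat.sInf_le ⟨l, rfl, rfl⟩

theorem exists_reduced_word (w : c.W) :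
    ∃ l : List (Fin n), l.length = c.len w ∧ (l.map c.s).prod = w := by
  obtain ⟨l, hl⟩ := c.exists_word w
  exact Nat.sInf_mem (s := {k | ∃ l : List (Fin n), l.length = k ∧ (l.map c.s).prod = w})
    ⟨_, l, rfl, hl⟩

theorem len_mul_s_lt {w : c.W} {i : Fin n} (h : ¬ 0 ≤ c.act w (c.sroot i)) :
    c.len (w * c.s i) < c.len w := by
  obtain ⟨l, hl, rfl⟩ := c.exists_reduced_word w
  obtain ⟨l', hl', hprod⟩ := c.exists_word_mul_s_of_not_nonneg l h
  have := c.len_le_length l'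
  rw [hprod] at this
  omega

theorem len_mul_s_le (w : c.W) (i : Fin n) : c.len (w * c.s i) ≤ c.len w + 1 := by
  obtain ⟨l, hl, rfl⟩ := c.exists_reduced_word w
  simpa [hl] using c.len_le_length (l ++ [i])

theorem card_inv_eq_length_of_reduced {l : List (Fin n)}
    (hl : c.len (l.map c.s).prod = l.length) : (c.inv (l.map c.s).prod).card = l.length := by
  induction l using List.reverseRecOn with
  | nil => simp [inv_one]
  | append_singleton t i ih =>
    simp only [List.map_append, List.map_singleton, List.prod_append, List.prod_singleton,
      List.length_append, List.length_singleton] at hl ⊢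
    have hle := c.len_le_length t
    have hpos : 0 ≤ c.act (t.map c.s).prod (c.sroot i) := by
      by_contra hneg
      have := c.len_mul_s_lt hneg
      omega
    have := c.len_mul_s_le (t.map c.s).prod i
    rw [c.card_inv_mul_s hpos, ih (by omega)]

theorem len_eq_card_inv (w : c.W) : c.len w = (c.inv w).card := by
  obtain ⟨l, hl, rfl⟩ := c.exists_reduced_word w
  rw [c.card_inv_eq_length_of_reduced hl.symm, hl]

theorem eq_one_of_forall_sroot {w : c.W} (h : ∀ i, 0 ≤ c.act w (c.sroot i)) : w = 1 := by
  have inv_eq : c.inv w = ∅ := Finset.eq_empty_of_forall_notMem fun β hβ =>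
    (c.mem_inv.1 hβ).2.2 <| c.act_nonneg_of_suppIn (S := Finset.univ) (fun i _ => h i)
      (c.mem_inv.1 hβ).2.1 fun i hi => absurd (Finset.mem_univ i) hi
  obtain ⟨l, hl, rfl⟩ := c.exists_reduced_word w
  rw [len_eq_card_inv, inv_eq, Finset.card_empty, List.length_eq_zero_iff] at hl
  simp [hl]

/-! ### Parabolic subgroups -/

theorem s_mem_Wsub {S : Finset (Fin n)} {i : Fin n} (hi : i ∈ S) : c.s i ∈ c.Wsub S :=
  Subgroup.subset_closure ⟨i, hi, rfl⟩

theorem Wsub_mono {S T : Finset (Fin n)} (h : S ⊆ T) : c.Wsub S ≤ c.Wsub T :=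
  Subgroup.closure_mono (Set.image_mono h)

theorem act_apply_of_mem_Wsub {S : Finset (Fin n)} {w : c.W} (hw : w ∈ c.Wsub S)
    (x : Fin n → ℤ) {k : Fin n} (hk : k ∉ S) : c.act w x k = x k := by
  induction hw using Subgroup.closure_induction generalizing x with
  | mem _ hs =>
    obtain ⟨i, hi, rfl⟩ := hs
    exact c.act_s_apply_of_ne (ne_of_mem_of_not_mem (Finset.mem_coe.1 hi) hk).symm x
  | one => rw [c.act_one]
  | mul a b _ _ ha hb => rw [c.act_mul, ha, hb]
  | inv a _ ha => rw [← ha (c.act a⁻¹ x), c.act_act_inv]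

theorem mem_Wsub_iff {S : Finset (Fin n)} {w : c.W} :
    w ∈ c.Wsub S ↔ ∀ x, ∀ k ∉ S, c.act w x k = x k := by
  refine ⟨fun hw x k hk => c.act_apply_of_mem_Wsub hw x hk, fun h => ?_⟩
  induction hlen : c.len w using Nat.strong_induction_on generalizing w with
  | _ m ih =>
    by_cases hall : ∀ i, 0 ≤ c.act w (c.sroot i)
    · rw [c.eq_one_of_forall_sroot hall]
      exact one_mem _
    obtain ⟨i, hi⟩ := not_forall.1 hall
    have hiS : i ∈ S := by
      by_contra hiS
      refine hi (c.nonneg_of_apply_pos (c.act_mem _ _ (c.sroot_mem i)) (i := i) ?_)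
      rw [h _ i hiS, c.sroot_apply_self]
      exact one_pos
    have hmem : w * c.s i ∈ c.Wsub S := by
      refine ih _ (hlen ▸ c.len_mul_s_lt hi) (fun x k hk => ?_) rfl
      rw [c.act_mul, h _ k hk, c.act_s_apply_of_ne (ne_of_mem_of_not_mem hiS hk).symm]
    exact (Subgroup.mul_mem_cancel_right _ (c.s_mem_Wsub hiS)).1 hmem

theorem refl_mem_Wsub {S : Finset (Fin n)} {γ : Fin n → ℤ} (hγ : γ ∈ c.R) (hS : suppIn S γ) :
    c.σ γ ∈ c.Wsub S :=
  c.mem_Wsub_iff.2 fun x k hk => by simp [c.act_refl_eq_sub hγ, hS k hk]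

theorem cor_act_apply_of_mem_Wsub {S : Finset (Fin n)} {w : c.W} (hw : w ∈ c.Wsub S)
    {β : Fin n → ℤ} (hβ : β ∈ c.R) {k : Fin n} (hk : k ∉ S) :
    c.cor (c.act w β) k = c.cor β k := by
  induction hw using Subgroup.closure_induction generalizing β with
  | mem _ hs =>
    obtain ⟨i, hi, rfl⟩ := hs
    have hki : k ≠ i := (ne_of_mem_of_not_mem (Finset.mem_coe.1 hi) hk).symm
    rw [s, c.cor_refl _ (c.sroot_mem i) β hβ]
    simp [sroot, c.cor_simple, hki]
  | one => rw [c.act_one]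
  | mul a b _ _ ha hb => rw [c.act_mul, ha (c.act_mem b β hβ), hb hβ]
  | inv a _ ha => rw [← ha (c.act_mem a⁻¹ β hβ), c.act_act_inv]

-- `s_γ ∈ W_S` changes coroots only within `S`, yet it sends `γ^∨` to `-γ^∨`.
theorem suppIn_cor {S : Finset (Fin n)} {γ : Fin n → ℤ} (hγ : γ ∈ c.R) (hS : suppIn S γ) :
    suppIn S (c.cor γ) := by
  intro k hk
  have h := c.cor_act_apply_of_mem_Wsub (c.refl_mem_Wsub hγ hS) hγ hk
  rw [c.act_refl_self hγ, c.cor_neg γ hγ, Pi.neg_apply] at h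
  omega

theorem suppIn_act_iff {S T : Finset (Fin n)} (hST : S ⊆ T) {w : c.W} (hw : w ∈ c.Wsub S)
    {x : Fin n → ℤ} : suppIn T (c.act w x) ↔ suppIn T x :=
  forall₂_congr fun _ hk => by rw [c.act_apply_of_mem_Wsub hw x fun hS => hk (hST hS)]

theorem act_nonneg_of_mem_Wsub {S : Finset (Fin n)} {w : c.W} (hw : w ∈ c.Wsub S)
    {β : Fin n → ℤ} (hβ : β ∈ c.R) (hpos : 0 ≤ β) (hS : ¬ suppIn S β) : 0 ≤ c.act w β := by
  simp only [suppIn, not_forall] at hS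
  obtain ⟨k, hk, hk0⟩ := hS
  refine c.nonneg_of_apply_pos (c.act_mem _ _ hβ) (i := k) ?_
  rw [c.act_apply_of_mem_Wsub hw β hk]
  exact (hpos k).lt_of_ne' hk0

variable {c} in
theorem MinRep.act_nonneg {S T : Finset (Fin n)} {w : c.W} (hw : c.MinRep T S w)
    {x : Fin n → ℤ} (hpos : 0 ≤ x) (hx : suppIn S x) : 0 ≤ c.act w x := by
  refine c.act_nonneg_of_suppIn (fun i hi => ?_) hpos hx
  by_contra hneg
  exact (c.len_mul_s_lt hneg).not_ge (hw.2 _ (c.s_mem_Wsub hi))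

/-! ### Inversions relative to a pair of parabolic subsystems -/

open Classical in
/-- The inversions of `w` that lie in `R_T` but not in `R_S`. -/
noncomputable def invBetween (S T : Finset (Fin n)) (w : c.W) : Finset (Fin n → ℤ) :=
  (c.inv w).filter fun β => suppIn T β ∧ ¬ suppIn S β

theorem mem_invBetween {S T : Finset (Fin n)} {w : c.W} {β : Fin n → ℤ} :
    β ∈ c.invBetween S T w ↔ β ∈ c.inv w ∧ suppIn T β ∧ ¬ suppIn S β := by
  classical
  exact Finset.mem_filter

theorem act_mem_invBetween {S T : Finset (Fin n)} (hST : S ⊆ T) {w y : c.W}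
    (hy : y ∈ c.Wsub S) {β : Fin n → ℤ} (hβ : β ∈ c.invBetween S T (w * y)) :
    c.act y β ∈ c.invBetween S T w := by
  simp only [mem_invBetween, mem_inv, c.act_mul] at hβ
  obtain ⟨⟨hR, hpos, hneg⟩, hT, hS⟩ := hβ
  simp only [mem_invBetween, mem_inv]
  exact ⟨⟨c.act_mem _ _ hR, c.act_nonneg_of_mem_Wsub hy hR hpos hS, hneg⟩,
    (c.suppIn_act_iff hST hy).2 hT, mt (c.suppIn_act_iff subset_rfl hy).1 hS⟩

theorem card_invBetween_mul {S T : Finset (Fin n)} (hST : S ⊆ T) (w : c.W) {y : c.W}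
    (hy : y ∈ c.Wsub S) : (c.invBetween S T (w * y)).card = (c.invBetween S T w).card :=
  Finset.card_nbij' (c.act y) (c.act y⁻¹) (fun _ hβ => c.act_mem_invBetween hST hy hβ)
    (fun _ hβ => c.act_mem_invBetween hST (inv_mem hy) (by rwa [mul_inv_cancel_right]))
    (fun β _ => c.act_inv_act y β) (fun β _ => c.act_act_inv y β)

theorem invBetween_mul_eq_inv {S T : Finset (Fin n)} {x z : c.W} (hx : c.MinRep T S x)
    (hz : ∀ i ∈ T, 0 ≤ c.act z (c.sroot i)) : c.invBetween S T (z * x) = c.inv x := by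
  ext β
  rw [mem_invBetween, mem_inv, mem_inv, c.act_mul]
  constructor
  · rintro ⟨⟨hR, hpos, hneg⟩, hT, -⟩
    exact ⟨hR, hpos, fun h =>
      hneg (c.act_nonneg_of_suppIn hz h ((c.suppIn_act_iff subset_rfl hx.1).2 hT))⟩
  · rintro ⟨hR, hpos, hneg⟩
    have hT : suppIn T β := by
      by_contra hT
      exact hneg (c.act_nonneg_of_mem_Wsub hx.1 hR hpos hT)
    refine ⟨⟨hR, hpos, fun h => hneg ?_⟩, hT, fun hS => hneg (hx.act_nonneg hpos hS)⟩
    have hxR := c.act_mem x β hR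
    by_contra hxneg
    rw [c.not_nonneg_iff hxR, ← neg_nonneg] at hxneg
    refine (c.not_nonneg_neg_iff (c.act_mem z _ hxR)).2 h ?_
    rw [← act_neg]
    refine c.act_nonneg_of_suppIn hz hxneg fun k hk => ?_
    rw [Pi.neg_apply, (c.suppIn_act_iff subset_rfl hx.1).2 hT k hk, neg_zero]

/-! ### Flags of simple roots and levels of roots -/

section Flag

variable {r : ℕ} (d : Fin n → Fin (r + 1))

/-- The flag `∅ = Δ_0 ⊆ Δ_1 ⊆ ⋯ ⊆ Δ_{r+1} = Δ` in which `α_i` belongs to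
`Δ_{d i + 1} \ Δ_{d i}`; every flag of length `r + 1` is of this form. -/
def flag (j : ℕ) : Finset (Fin n) := {i | (d i : ℕ) < j}

theorem mem_flag {j : ℕ} {i : Fin n} : i ∈ flag d j ↔ (d i : ℕ) < j := by simp [flag]

theorem flag_mono : Monotone (flag d) := fun _ _ hjk _ hi =>
  (mem_flag d).2 (((mem_flag d).1 hi).trans_le hjk)

/-- The index `k`, counted from `0`, with `x ∈ ℤΔ_{k+1} \ ℤΔ_k` (and `0` for `x = 0`). -/
noncomputable def level (x : Fin n → ℤ) : Fin (r + 1) := ({i | x i ≠ 0} : Finset (Fin n)).sup d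

theorem suppIn_flag_iff {x : Fin n → ℤ} (hx : x ≠ 0) {j : ℕ} :
    suppIn (flag d j) x ↔ (level d x : ℕ) < j := by
  constructor
  · intro h
    obtain ⟨i, hi⟩ := Function.ne_iff.1 hx
    have hne : ({i | x i ≠ 0} : Finset (Fin n)).Nonempty := ⟨i, by simpa using hi⟩
    obtain ⟨k, hk, hlevel⟩ := Finset.exists_mem_eq_sup _ hne d
    rw [level, hlevel, ← mem_flag]
    by_contra hmem
    simp [h k hmem] at hk
  · intro h i hi
    by_contra hxi
    have hle : d i ≤ level d x := Finset.le_sup (by simpa using hxi)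
    exact hi ((mem_flag d).2 (lt_of_le_of_lt hle h))

theorem suppIn_flag_level_iff {x : Fin n → ℤ} (hx : x ≠ 0) {k : Fin (r + 1)} :
    suppIn (flag d (k + 1)) x ∧ ¬ suppIn (flag d k) x ↔ level d x = k := by
  rw [suppIn_flag_iff d hx, suppIn_flag_iff d hx, Fin.ext_iff]
  omega

theorem sum_card_invBetween_flag (w : c.W) :
    ∑ k : Fin (r + 1), (c.invBetween (flag d k) (flag d (k + 1)) w).card = (c.inv w).card := by
  classical
  rw [Finset.card_eq_sum_card_fiberwise (f := level d) (t := Finset.univ) fun _ _ => by simp]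
  refine Finset.sum_congr rfl fun k _ => congrArg Finset.card (Finset.ext fun β => ?_)
  rw [mem_invBetween, Finset.mem_filter]
  exact and_congr_right fun hβ =>
    suppIn_flag_level_iff d (c.root_ne_zero β (c.mem_inv.1 hβ).1)

/-- `IsDecomp` for an arbitrary flag: `w = v_{r+1} ⋯ v_1` with `v_j ∈ W_{Δ_j}^{Δ_{j-1}}`, where
`v k` stands for `v_{k+1}`. -/
def IsFlagDecomp (w : c.W) (v : Fin (r + 1) → c.W) : Prop :=
  (∀ k : Fin (r + 1), c.MinRep (flag d (k + 1)) (flag d k) (v k)) ∧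
    w = (List.ofFn v).reverse.prod

end Flag

theorem reverse_prod_ofFn_eq {M : Type*} [Monoid M] {N : ℕ} (v : Fin N → M) (k : Fin N) :
    (List.ofFn v).reverse.prod =
      ((List.ofFn v).drop (k + 1)).reverse.prod * v k * ((List.ofFn v).take k).reverse.prod := by
  have hlt : (k : ℕ) < (List.ofFn v).length := by simp
  have drop_eq : (List.ofFn v).drop k = v k :: (List.ofFn v).drop (k + 1) := by
    rw [List.drop_eq_getElem_cons hlt, List.getElem_ofFn]
  conv_lhs => rw [← List.take_append_drop k (List.ofFn v), drop_eq]
  simp only [List.reverse_append, List.reverse_cons, List.prod_append, List.prod_singleton]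

namespace IsFlagDecomp

variable {c} {r : ℕ} {d : Fin n → Fin (r + 1)} {w : c.W} {v : Fin (r + 1) → c.W}

theorem prod_take_mem_Wsub (hv : c.IsFlagDecomp d w v) (j : ℕ) :
    ((List.ofFn v).take j).reverse.prod ∈ c.Wsub (flag d j) := by
  refine Subgroup.list_prod_mem _ fun x hx => ?_
  rw [List.mem_reverse, List.mem_take_iff_getElem] at hx
  obtain ⟨m, hm, rfl⟩ := hx
  rw [List.getElem_ofFn]
  have hm : m < j ∧ m < r + 1 := by simpa using hm
  exact c.Wsub_mono (flag_mono d hm.1) (hv.1 ⟨m, hm.2⟩).1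

theorem act_prod_drop_nonneg (hv : c.IsFlagDecomp d w v) {j : ℕ} (hj : j ≤ r + 1)
    {x : Fin n → ℤ} (hpos : 0 ≤ x) (hx : suppIn (flag d j) x) :
    0 ≤ c.act ((List.ofFn v).drop j).reverse.prod x := by
  induction hj using Nat.decreasingInduction generalizing x with
  | self => simpa [List.drop_of_length_le, c.act_one] using hpos
  | of_succ j hj ih =>
    have hlt : j < (List.ofFn v).length := by simpa using hj
    have hmin := hv.1 ⟨j, hj⟩
    rw [List.drop_eq_getElem_cons hlt, List.reverse_cons, List.prod_append, List.prod_singleton,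
      List.getElem_ofFn, c.act_mul]
    exact ih (hmin.act_nonneg hpos hx) <| (c.suppIn_act_iff subset_rfl hmin.1).2
      fun i hi => hx i fun h => hi (flag_mono d j.le_succ h)

theorem len_eq_card_invBetween (hv : c.IsFlagDecomp d w v) (k : Fin (r + 1)) :
    c.len (v k) = (c.invBetween (flag d k) (flag d (k + 1)) w).card := by
  have drop_nonneg : ∀ i ∈ flag d (k + 1),
      0 ≤ c.act ((List.ofFn v).drop (k + 1)).reverse.prod (c.sroot i) := fun i hi =>
    hv.act_prod_drop_nonneg k.2 (c.sroot_nonneg i)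
      fun _ hj => c.sroot_apply_of_ne (ne_of_mem_of_not_mem hi hj).symm
  rw [hv.2, reverse_prod_ofFn_eq v k,
    c.card_invBetween_mul (flag_mono d (Nat.le_succ k)) _ (hv.prod_take_mem_Wsub k),
    c.invBetween_mul_eq_inv (hv.1 k) drop_nonneg, len_eq_card_inv]

theorem sum_len (hv : c.IsFlagDecomp d w v) : ∑ k, c.len (v k) = c.len w := by
  simp only [hv.len_eq_card_invBetween, sum_card_invBetween_flag, len_eq_card_inv]

end IsFlagDecomp

/-! ### Covers in the Bruhat order -/

section Cover

variable {u : c.W} {γ δ : Fin n → ℤ}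

open Classical in
/-- The involution of the positive roots that applies `s_γ` whenever the result is again
positive.  If `u γ > 0`, it embeds the inversions of `u` into those of `u s_γ` other than `γ`. -/
noncomputable def posRefl (γ δ : Fin n → ℤ) : Fin n → ℤ :=
  if 0 ≤ c.act (c.σ γ) δ then c.act (c.σ γ) δ else δ

theorem posRefl_posRefl (hγ : γ ∈ c.R) (hδ : 0 ≤ δ) : c.posRefl γ (c.posRefl γ δ) = δ := by
  by_cases h : 0 ≤ c.act (c.σ γ) δ
  · simp [posRefl, h, c.act_refl_act_refl hγ, hδ]
  · simp [posRefl, h]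

theorem pair_cor_pos (hγ : γ ∈ c.R) (hγpos : 0 ≤ γ) (hδ : 0 ≤ δ)
    (hneg : ¬ 0 ≤ c.act (c.σ γ) δ) : 0 < c.pair δ (c.cor γ) := by
  contrapose! hneg
  rw [c.act_refl_eq_sub hγ]
  exact sub_nonneg.2 ((smul_nonpos_of_nonpos_of_nonneg hneg hγpos).trans hδ)

theorem mem_inv_mul_refl_self (hγ : γ ∈ c.R) (hγpos : 0 ≤ γ) (hu : 0 ≤ c.act u γ) :
    γ ∈ c.inv (u * c.σ γ) := by
  refine c.mem_inv.2 ⟨hγ, hγpos, ?_⟩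
  rwa [c.act_mul, c.act_refl_self hγ, act_neg, c.not_nonneg_neg_iff (c.act_mem u γ hγ)]

theorem posRefl_mem_inv (hγ : γ ∈ c.R) (hγpos : 0 ≤ γ) (hu : 0 ≤ c.act u γ)
    (hδ : δ ∈ c.inv u) : c.posRefl γ δ ∈ (c.inv (u * c.σ γ)).erase γ := by
  obtain ⟨hR, hpos, hneg⟩ := c.mem_inv.1 hδ
  rw [Finset.mem_erase, mem_inv, posRefl]
  split_ifs with h
  · refine ⟨fun e => ?_, c.act_mem _ _ hR, h, ?_⟩
    · rw [← c.act_refl_act_refl hγ δ, e, c.act_refl_self hγ] at hpos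
      exact (c.not_nonneg_neg_iff hγ).2 hγpos hpos
    · rwa [c.act_mul, c.act_refl_act_refl hγ]
  · refine ⟨fun e => hneg (e ▸ hu), hR, hpos, fun h' => hneg ?_⟩
    rw [c.act_mul_refl hγ, sub_nonneg] at h'
    exact (smul_nonneg (c.pair_cor_pos hγ hγpos hpos h).le hu).trans h'

theorem injOn_posRefl_inv (hγ : γ ∈ c.R) (u : c.W) :
    Set.InjOn (c.posRefl γ) (c.inv u) :=
  Set.LeftInvOn.injOn fun _ hδ => c.posRefl_posRefl hγ (c.mem_inv.1 hδ).2.1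

theorem len_lt_len_mul_refl (hγ : γ ∈ c.R) (hγpos : 0 ≤ γ) (hu : 0 ≤ c.act u γ) :
    c.len u < c.len (u * c.σ γ) := by
  classical
  rw [len_eq_card_inv, len_eq_card_inv,
    ← Finset.card_erase_add_one (c.mem_inv_mul_refl_self hγ hγpos hu), Nat.lt_succ_iff]
  exact Finset.card_le_card_of_injOn (c.posRefl γ)
    (fun _ hδ => c.posRefl_mem_inv hγ hγpos hu hδ) (c.injOn_posRefl_inv hγ u)

theorem act_nonneg_of_len_lt (hγ : γ ∈ c.R) (hγpos : 0 ≤ γ)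
    (hlen : c.len u < c.len (u * c.σ γ)) : 0 ≤ c.act u γ := by
  by_contra hneg
  rw [c.not_nonneg_iff (c.act_mem u γ hγ), ← neg_nonneg, ← act_neg, ← c.act_refl_self hγ,
    ← c.act_mul] at hneg
  have := c.len_lt_len_mul_refl hγ hγpos hneg
  rw [mul_assoc, c.refl_sq γ hγ, mul_one] at this
  exact this.not_gt hlen

theorem posRefl_mem_inv_of_cover (hγ : γ ∈ c.R) (hγpos : 0 ≤ γ)
    (hlen : c.len (u * c.σ γ) = c.len u + 1) (hδ : δ ∈ c.inv (u * c.σ γ)) (hne : δ ≠ γ) :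
    c.posRefl γ δ ∈ c.inv u := by
  classical
  have hu : 0 ≤ c.act u γ := c.act_nonneg_of_len_lt hγ hγpos (by omega)
  have hcard : ((c.inv (u * c.σ γ)).erase γ).card ≤ (c.inv u).card := by
    rw [Finset.card_erase_of_mem (c.mem_inv_mul_refl_self hγ hγpos hu), ← len_eq_card_inv,
      ← len_eq_card_inv, hlen, Nat.add_sub_cancel]
  obtain ⟨ε, hε, rfl⟩ := Finset.surjOn_of_injOn_of_card_le (c.posRefl γ)
    (fun _ hε => c.posRefl_mem_inv hγ hγpos hu hε) (c.injOn_posRefl_inv hγ u) hcard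
    (Finset.mem_erase.2 ⟨hne, hδ⟩)
  rwa [c.posRefl_posRefl hγ (c.mem_inv.1 hε).2.1]

theorem pair_cor_nonpos_of_suppIn {S : Finset (Fin n)} (hγ : γ ∈ c.R) (hγpos : 0 ≤ γ)
    (hγS : ¬ suppIn S γ) (hδS : suppIn S δ) (hpos : 0 ≤ c.act (c.σ γ) δ) :
    c.pair δ (c.cor γ) ≤ 0 := by
  simp only [suppIn, not_forall] at hγS
  obtain ⟨k, hk, hγk⟩ := hγS
  have hδk : 0 ≤ -(c.pair δ (c.cor γ) * γ k) := by
    simpa [c.act_refl_eq_sub hγ, hδS k hk] using hpos k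
  exact nonpos_of_mul_nonpos_left (neg_nonneg.1 hδk) ((hγpos k).lt_of_ne' hγk)

theorem mem_inv_of_mem_inv_cover {S : Finset (Fin n)} (hγ : γ ∈ c.R) (hγpos : 0 ≤ γ)
    (hlen : c.len (u * c.σ γ) = c.len u + 1) (hγS : ¬ suppIn S γ) (hδS : suppIn S δ)
    (hδ : δ ∈ c.inv (u * c.σ γ)) : δ ∈ c.inv u := by
  obtain ⟨hR, hpos, hneg⟩ := c.mem_inv.1 hδ
  by_cases h : 0 ≤ c.act (c.σ γ) δ
  · refine c.mem_inv.2 ⟨hR, hpos, fun hu => hneg ?_⟩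
    have hpair := c.pair_cor_nonpos_of_suppIn hγ hγpos hγS hδS h
    have huγ := c.act_nonneg_of_len_lt hγ hγpos (u := u) (by omega)
    rw [c.act_mul_refl hγ]
    exact sub_nonneg.2 ((smul_nonpos_of_nonpos_of_nonneg hpair huγ).trans hu)
  · have hne : δ ≠ γ := fun e => hγS (e ▸ hδS)
    simpa only [posRefl, if_neg h] using c.posRefl_mem_inv_of_cover hγ hγpos hlen hδ hne

theorem invBetween_cover_subset {S T : Finset (Fin n)} (hγ : γ ∈ c.R) (hγpos : 0 ≤ γ)
    (hlen : c.len (u * c.σ γ) = c.len u + 1) (hγT : ¬ suppIn T γ) :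
    c.invBetween S T (u * c.σ γ) ⊆ c.invBetween S T u := by
  intro δ hδ
  rw [mem_invBetween] at hδ ⊢
  exact ⟨c.mem_inv_of_mem_inv_cover hγ hγpos hlen hγT hδ.2.1 hδ.1, hδ.2⟩

end Cover

end RootSystemData

/-! ### The lexicographic comparison -/

theorem lexLT_iff_toLex_lt {m : ℕ} {x y : Fin m → ℤ} : lexLT x y ↔ toLex x < toLex y :=
  exists_congr fun _ => and_comm

theorem lexLE_of_not_lexLT {m : ℕ} {x y : Fin m → ℤ} (h : ¬ lexLT y x) : lexLE x y := by
  rw [lexLT_iff_toLex_lt] at h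
  exact ((not_lt (α := Lex (Fin m → ℤ))).1 h).eq_or_lt.imp toLex_inj.1 lexLT_iff_toLex_lt.2

theorem lexLE_add_ite {N : ℕ} {x y : Fin N → ℤ} {m p : Fin N} (hmp : m ≤ p)
    (hbelow : ∀ k < p, y k ≤ x k) (habove : ∀ k, p < k → y k = x k)
    (hsum : ∑ k, y k = ∑ k, x k + 1) :
    lexLE y fun k => x k + if k = m then 1 else 0 := by
  refine lexLE_of_not_lexLT fun ⟨j, hj, hpre⟩ => ?_
  have hxj : x j < y j := lt_of_le_of_lt (by dsimp only; split_ifs <;> omega) hj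
  obtain rfl : j = p := by
    rcases lt_trichotomy j p with h | h | h
    · exact absurd (hbelow j h) hxj.not_ge
    · exact h
    · exact absurd (habove j h) hxj.ne'
  obtain rfl : m = j := hmp.eq_of_not_lt fun h => by
    have hym : x m + 1 = y m := by simpa using hpre m h
    have := hbelow m h
    omega
  have hne : ∀ k ≠ m, y k = x k := fun k hk => by
    rcases hk.lt_or_gt with h | h
    · simpa [hk] using (hpre k h).symm
    · exact habove k h
  have hdiff : ∑ k, (y k - x k) = 1 := by rw [Finset.sum_sub_distrib, hsum]; ring
  rw [Fintype.sum_eq_single m fun k hk => sub_eq_zero.2 (hne k hk)] at hdiff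
  simp only [if_true] at hj
  omega

/-! ### The key lemma -/

open RootSystemData

theorem key_lemma_a_general {n : ℕ} (c : RootSystemData n) {r : ℕ} (d : Fin n → Fin (r + 1))
    {u : c.W} {γ : Fin n → ℤ} (hγR : γ ∈ c.R) (hγpos : ∀ i, 0 ≤ γ i)
    (hlen : c.len (u * c.σ γ) = c.len u + 1) {i : Fin n} (hi : c.cor γ i ≠ 0)
    {v v' : Fin (r + 1) → c.W} (hv : c.IsFlagDecomp d u v)
    (hv' : c.IsFlagDecomp d (u * c.σ γ) v') :
    lexLE (fun k => (c.len (v' k) : ℤ))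
      (fun k => (c.len (v k) : ℤ) + if k = d i then 1 else 0) := by
  have suppIn_γ {j : ℕ} : suppIn (flag d j) γ ↔ (level d γ : ℕ) < j :=
    suppIn_flag_iff d (c.root_ne_zero γ hγR)
  refine lexLE_add_ite (p := level d γ) ?_ (fun k hk => ?_) (fun k hk => ?_) ?_
  · by_contra hlt
    exact hi (c.suppIn_cor hγR (suppIn_γ.2 (not_le.1 hlt)) i (by simp [mem_flag]))
  · rw [hv.len_eq_card_invBetween, hv'.len_eq_card_invBetween, Nat.cast_le]
    exact Finset.card_le_card (c.invBetween_cover_subset hγR hγpos hlen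
      (mt suppIn_γ.1 (by rw [Fin.lt_def] at hk; omega)))
  · rw [hv.len_eq_card_invBetween, hv'.len_eq_card_invBetween,
      c.card_invBetween_mul (flag_mono d (Nat.le_succ k)) u (c.refl_mem_Wsub hγR (suppIn_γ.2 hk))]
  · exact_mod_cast hv'.sum_len.trans (hlen.trans (congrArg (· + 1) hv.sum_len.symm))

/-- The function encoding the sets `deltaSet n r j` as a `flag`: every simple root with index
at least `r` enters in the last step. -/
def deltaLevel (n r : ℕ) (i : Fin n) : Fin (r + 1) :=
  ⟨min i r, Nat.lt_succ_of_le (min_le_right _ _)⟩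

theorem deltaSet_eq_flag {n r j : ℕ} (hj : j ≤ r + 1) :
    deltaSet n r j = flag (deltaLevel n r) j := by
  ext i
  rw [mem_flag, deltaLevel, deltaSet]
  split_ifs with h
  · simp [h]
  · simp only [Finset.mem_filter, Finset.mem_univ, true_and]
    omega

theorem RootSystemData.IsDecomp.isFlagDecomp {n r : ℕ} {c : RootSystemData n} {w : c.W}
    {v : Fin (r + 1) → c.W} (hv : c.IsDecomp r w v) : c.IsFlagDecomp (deltaLevel n r) w v := by
  refine ⟨fun k => ?_, hv.2⟩
  rw [← deltaSet_eq_flag k.2, ← deltaSet_eq_flag k.2.le]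
  exact hv.1 k

/-- **Key Lemma, part (a).**  Let `u ∈ W` and `γ ∈ R^+` with `ℓ(u s_γ) = ℓ(u) + 1`.
Then for every `i` with `⟨χ_i, γ^∨⟩ ≠ 0`, `gr(u s_γ) ≤ gr(u) + e_m` in the
lexicographic order on `ℤ^{r+1}`, where `m` is the unique index with
`α_i ∈ Δ_m \ Δ_{m-1}` (i.e. the `0`-based grading coordinate `min i r`). -/
theorem key_lemma_a {n : ℕ} (c : RootSystemData n)
    (r : ℕ) (hr1 : 1 ≤ r) (hrn : r < n) (hA : c.PathA r)
    (u : c.W) (γ : Fin n → ℤ) (hγR : γ ∈ c.R) (hγpos : ∀ i, 0 ≤ γ i)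
    (hlen : c.len (u * c.σ γ) = c.len u + 1)
    (i : Fin n) (hi : c.cor γ i ≠ 0)
    (v v' : Fin (r + 1) → c.W)
    (hv : c.IsDecomp r u v) (hv' : c.IsDecomp r (u * c.σ γ) v') :
    lexLE (fun k => (c.len (v' k) : ℤ))
      (fun k => (c.len (v k) : ℤ) + if (k : ℕ) = min (i : ℕ) r then 1 else 0) := by
  simpa only [deltaLevel, Fin.ext_iff] using
    key_lemma_a_general c (deltaLevel n r) hγR hγpos hlen hi hv.isFlagDecomp hv'.isFlagDecomp
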